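/- (i) For every w ∈ W and every x ∈ Φ̂ ∪ E(Φ), one has |w(x)|₁ ≠ 0, so that w·x = (w(x))^ is defined. (ii) The sets Φ̂ and E(Φ) are each stable under this action: if x ∈ Φ̂ then w·x ∈ Φ̂, and if x ∈ E(Φ) then w·x ∈ E(Φ); moreover Φ̂ = {w·α : w∈W, α∈Δ}. (iii) Consequently the set Φ̂ ∪ E(Φ), which is the topological closure of Φ̂, is stable under the action. -/

import Mathlib

/-!
The main point is that every root is a nonnegative or a nonpositive combination of the simple
roots. Map the Coxeter group whose matrix records the orders of the `s_α s_β` onto `W`. If `s` is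
not a right descent of an element `w`, write `w = v π` with `π` an alternating word in `s` and `t`,
with lengths adding up, such that neither `s` nor `t` is a descent of `v`. The coefficients of
`π α_s` on `α_s` and `α_t` are consecutive values of Chebyshev polynomials of the second kind at
`-B(α_s, α_t)`. These are nonnegative, either because the argument is at least `1` or because it is
`cos (π/k)` and the word is too short for the index to reach `k`. Induction on length applied to
`v α_s` and `v α_t` then shows that `w α_s` is positive.

Consequently `|·|₁` does not vanish on roots, `Φ̂` is the normalization of all of `Φ`, and `W` acts
on it. For `E(Φ)` it suffices to treat a simple reflection `s_α`. It changes only the coordinate at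
`α`, so it maps every normalized root other than `α` into `cone(Δ)`; the cone is closed, hence the
image of an accumulation point lies in `cone(Δ) \ {0}`, where `|·|₁ > 0`. There the normalized
action is continuous and injective, and therefore preserves accumulation points.
-/

open Filter Topology

noncomputable section

variable {ι V : Type*} [Fintype ι] [NormedAddCommGroup V] [NormedSpace ℝ V]

/-- The set of simple `B`-reflections: the linear automorphisms of `V` given by the
`B`-reflection formula `u ↦ u - 2 (B α u / B α α) • α` associated to a simple root `α ∈ Δ`. -/
def simpleReflections (B : LinearMap.BilinForm ℝ V) (Δ : Module.Basis ι ℝ V) :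
    Set (V ≃ₗ[ℝ] V) :=
  { e | ∃ i : ι, ∀ u : V, e u = u - (2 * B (Δ i) u / B (Δ i) (Δ i)) • Δ i }

/-- The geometric Coxeter group `W`: the subgroup of linear automorphisms of `V`
generated by the simple `B`-reflections. -/
def cox (B : LinearMap.BilinForm ℝ V) (Δ : Module.Basis ι ℝ V) : Subgroup (V ≃ₗ[ℝ] V) :=
  Subgroup.closure (simpleReflections B Δ)

/-- The root system `Φ = W ⬝ Δ`. -/
def Phi (B : LinearMap.BilinForm ℝ V) (Δ : Module.Basis ι ℝ V) : Set V :=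
  { ρ | ∃ w ∈ cox B Δ, ∃ i : ι, w (Δ i) = ρ }

/-- The positive roots `Φ⁺ = Φ ∩ cone(Δ)`. -/
def posPhi (B : LinearMap.BilinForm ℝ V) (Δ : Module.Basis ι ℝ V) : Set V :=
  { ρ ∈ Phi B Δ | ∀ i : ι, 0 ≤ Δ.repr ρ i }

/-- `|v|₁`: the sum of the coordinates of `v` in the basis `Δ`. -/
def l1 (Δ : Module.Basis ι ℝ V) (v : V) : ℝ := ∑ i : ι, Δ.repr v i

/-- The normalization map `v ↦ v̂ = v / |v|₁`. -/
def nrm (Δ : Module.Basis ι ℝ V) (v : V) : V := (l1 Δ v)⁻¹ • v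

/-- The set `Φ̂` of normalized roots. -/
def nPhi (B : LinearMap.BilinForm ℝ V) (Δ : Module.Basis ι ℝ V) : Set V :=
  nrm Δ '' posPhi B Δ

/-- `E(Φ)`: the set of accumulation points of the set of normalized roots. -/
def Eset (B : LinearMap.BilinForm ℝ V) (Δ : Module.Basis ι ℝ V) : Set V :=
  { x | AccPt x (𝓟 (nPhi B Δ)) }

/-- The isotropic cone `Q` of `B`. -/
def isoQ (B : LinearMap.BilinForm ℝ V) : Set V := { v | B v v = 0 }

section ChebyshevValues

open Polynomial.Chebyshev (S U)

theorem chebyshevU_eval_nonneg_of_one_le {x : ℝ} (hx : 1 ≤ x) {n : ℤ} (hn : -1 ≤ n) :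
    0 ≤ (U ℝ n).eval x := by
  induction n, hn using Int.leInduction with
  | base => simp
  | succ n _ ih =>
    have hT := Polynomial.Chebyshev.one_le_eval_T_real (n + 1) hx
    rw [Polynomial.Chebyshev.U_eq_X_mul_U_add_T, Polynomial.eval_add, Polynomial.eval_mul,
      Polynomial.eval_X]
    positivity

theorem sin_pi_div_pos {x : ℝ} (hx : 1 < x) : 0 < Real.sin (Real.pi / x) :=
  Real.sin_pos_of_pos_of_lt_pi (by positivity) (div_lt_self Real.pi_pos hx)

theorem chebyshevU_eval_cos_pi_div_nonneg {k : ℕ} (hk : 2 ≤ k) {n : ℤ} (hn : -1 ≤ n)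
    (hnk : n < k) : 0 ≤ (U ℝ n).eval (Real.cos (Real.pi / k)) := by
  have hn' : (0 : ℝ) ≤ n + 1 := by exact_mod_cast (by lia : 0 ≤ n + 1)
  have hnk' : (n + 1 : ℝ) ≤ k := by exact_mod_cast hnk
  have hsin : 0 ≤ Real.sin ((n + 1) * (Real.pi / k)) := by
    refine Real.sin_nonneg_of_nonneg_of_le_pi (by positivity) ?_
    calc (n + 1) * (Real.pi / k) ≤ k * (Real.pi / k) := by gcongr
      _ = Real.pi := by field_simp
  rw [← Polynomial.Chebyshev.U_real_cos] at hsin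
  exact nonneg_of_mul_nonneg_left hsin (sin_pi_div_pos (by exact_mod_cast hk))

theorem chebyshevS_eval_two_mul_cos_pi_div {m : ℕ} (hm : 2 ≤ m) :
    (S ℝ (m - 1)).eval (2 * Real.cos (Real.pi / m)) = 0 := by
  have hsin : Real.sin (Real.pi / m) ≠ 0 := (sin_pi_div_pos (by exact_mod_cast hm)).ne'
  refine (mul_eq_zero.mp ?_).resolve_right hsin
  have hangle : (((m - 1 : ℤ) : ℝ) + 1) * (Real.pi / m) = Real.pi := by
    push_cast
    field_simp
    ring
  rw [Polynomial.Chebyshev.S_two_mul_real_cos, hangle, Real.sin_pi]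

theorem chebyshevS_eval_add_eval_two_mul_cos {m : ℕ} (hm : 1 ≤ m) :
    (S ℝ m).eval (2 * Real.cos (2 * Real.pi / (2 * m + 1))) +
      (S ℝ (m - 1)).eval (2 * Real.cos (2 * Real.pi / (2 * m + 1))) = 0 := by
  set θ : ℝ := 2 * Real.pi / (2 * m + 1) with hθ
  have hm' : (1 : ℝ) ≤ m := by exact_mod_cast hm
  have hsin : Real.sin θ ≠ 0 := by
    have hpos := sin_pi_div_pos (x := (2 * m + 1) / 2) (by linarith)
    rw [div_div_eq_mul_div, mul_comm] at hpos
    exact hpos.ne'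
  have hangle : ((m : ℤ) + 1 : ℝ) * θ = 2 * Real.pi - m * θ := by
    rw [hθ]
    push_cast
    field_simp
    ring
  refine (mul_eq_zero.mp ?_).resolve_right hsin
  rw [add_mul, Polynomial.Chebyshev.S_two_mul_real_cos, Polynomial.Chebyshev.S_two_mul_real_cos,
    hangle, Real.sin_two_pi_sub]
  push_cast
  ring_nf

end ChebyshevValues

section UnitReflection

variable {κ E : Type*} [AddCommGroup E] [Module ℝ E] {B : LinearMap.BilinForm ℝ E} {a b : E}

/-- The `B`-reflection `u ↦ u - 2 (B a u) • a` in a vector `a` with `B a a = 1`. It is a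
`Module.reflection`, so that the library formula for powers of a product of two reflections
applies. -/
def unitReflection (B : LinearMap.BilinForm ℝ E) {a : E} (ha : B a a = 1) : E ≃ₗ[ℝ] E :=
  Module.reflection (x := a) (f := (2 : ℝ) • B a) (by simp [ha])

theorem unitReflection_apply (ha : B a a = 1) (u : E) :
    unitReflection B ha u = u - (2 * B a u) • a := by
  simp [unitReflection, Module.reflection_apply]

theorem unitReflection_apply_self (ha : B a a = 1) : unitReflection B ha a = -a :=
  Module.reflection_apply_self _

theorem unitReflection_mul_self (ha : B a a = 1) :
    unitReflection B ha * unitReflection B ha = 1 :=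
  LinearEquiv.ext (Module.involutive_reflection _)

open Polynomial.Chebyshev (S) in
theorem unitReflection_mul_pow_eq_one_of_chebyshevS (ha : B a a = 1) (hb : B b b = 1) {t : ℝ}
    (ht : t = 2 * B a b * (2 * B b a) - 2) {n : ℕ}
    (h₁ : (S ℝ ((n - 2) / 2)).eval t *
      ((S ℝ ((n - 1) / 2)).eval t + (S ℝ ((n - 3) / 2)).eval t) = 0)
    (h₂ : (S ℝ ((n - 1) / 2)).eval t *
      ((S ℝ (n / 2)).eval t + (S ℝ ((n - 2) / 2)).eval t) = 0) :
    (unitReflection B ha * unitReflection B hb) ^ n = 1 := by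
  ext z
  refine (Module.reflection_mul_reflection_pow_apply _ _ n z t (by simpa using ht)).trans ?_
  rw [h₁, h₂, zero_smul, zero_smul, add_zero, add_zero, LinearEquiv.coe_one, id_eq]

theorem unitReflection_mul_pow_two_mul_eq_one (ha : B a a = 1) (hb : B b b = 1)
    (hab : B a b = B b a) {m : ℕ} (hm : 2 ≤ m)
    (hcos : B a b = -Real.cos (Real.pi / (2 * m))) :
    (unitReflection B ha * unitReflection B hb) ^ (2 * m) = 1 := by
  have ht : 2 * Real.cos (Real.pi / m) = 2 * B a b * (2 * B b a) - 2 := by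
    rw [← hab, hcos, show Real.pi / m = 2 * (Real.pi / (2 * m)) by field_simp, Real.cos_two_mul]
    ring
  have hS := chebyshevS_eval_two_mul_cos_pi_div hm
  refine unitReflection_mul_pow_eq_one_of_chebyshevS ha hb ht ?_ ?_
  · rw [show (((2 * m : ℕ) : ℤ) - 2) / 2 = m - 1 by lia, hS, zero_mul]
  · rw [show (((2 * m : ℕ) : ℤ) - 1) / 2 = m - 1 by lia, hS, zero_mul]

theorem unitReflection_mul_pow_two_mul_add_one_eq_one (ha : B a a = 1) (hb : B b b = 1)
    (hab : B a b = B b a) {m : ℕ} (hm : 1 ≤ m)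
    (hcos : B a b = -Real.cos (Real.pi / (2 * m + 1))) :
    (unitReflection B ha * unitReflection B hb) ^ (2 * m + 1) = 1 := by
  have ht : 2 * Real.cos (2 * Real.pi / (2 * m + 1)) = 2 * B a b * (2 * B b a) - 2 := by
    rw [← hab, hcos, mul_div_assoc, Real.cos_two_mul]
    ring
  have hS := chebyshevS_eval_add_eval_two_mul_cos hm
  refine unitReflection_mul_pow_eq_one_of_chebyshevS ha hb ht ?_ ?_
  · rw [show (((2 * m + 1 : ℕ) : ℤ) - 1) / 2 = m by lia,
      show (((2 * m + 1 : ℕ) : ℤ) - 3) / 2 = m - 1 by lia, hS, mul_zero]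
  · rw [show ((2 * m + 1 : ℕ) : ℤ) / 2 = m by lia,
      show (((2 * m + 1 : ℕ) : ℤ) - 2) / 2 = m - 1 by lia, hS, mul_zero]

theorem unitReflection_mul_sq_eq_one (ha : B a a = 1) (hb : B b b = 1)
    (hab : B a b = 0) (hba : B b a = 0) :
    (unitReflection B ha * unitReflection B hb) ^ 2 = 1 := by
  ext z
  simp only [pow_two, LinearEquiv.mul_apply, unitReflection_apply, map_sub, map_smul, hab, hba, ha,
    hb, LinearEquiv.coe_one, id_eq]
  module

theorem unitReflection_mul_pow_eq_one (ha : B a a = 1) (hb : B b b = 1)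
    (hab : B a b = B b a) {k : ℕ} (hk : 2 ≤ k) (hcos : B a b = -Real.cos (Real.pi / k)) :
    (unitReflection B ha * unitReflection B hb) ^ k = 1 := by
  obtain rfl | hk := hk.eq_or_lt
  · have hzero : B a b = 0 := by simp [hcos]
    exact unitReflection_mul_sq_eq_one ha hb hzero (hab ▸ hzero)
  obtain ⟨m, rfl | rfl⟩ := k.even_or_odd'
  · exact unitReflection_mul_pow_two_mul_eq_one ha hb hab (by lia) (by exact_mod_cast hcos)
  · exact unitReflection_mul_pow_two_mul_add_one_eq_one ha hb hab (by lia) (by exact_mod_cast hcos)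

theorem unitReflection_injective {α : κ → E} (hlin : LinearIndependent ℝ α)
    (hα : ∀ i, B (α i) (α i) = 1) :
    Function.Injective fun i ↦ unitReflection B (hα i) := by
  intro i j hij
  have happ : -α i = α i - (2 * B (α j) (α i)) • α j := by
    rw [← unitReflection_apply_self (hα i), ← unitReflection_apply (hα j)]
    exact congr($hij (α i))
  have hsmul : (2 : ℝ) • α i = (2 * B (α j) (α i)) • α j := by
    rw [two_smul, ← neg_add_eq_iff_eq_add.mp (eq_sub_iff_add_eq.mp happ)]
  exact hlin.eq_of_smul_apply_eq_smul_apply _ _ i j two_ne_zero hsmul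

end UnitReflection

section Involutions

variable {κ G : Type*} [Group G] {r : κ → G}

/-- The Coxeter matrix of the orders of the products `r i * r j` of distinct involutions. With this
choice the braid relations hold by construction, so that the Coxeter group of the matrix maps onto
the group generated by the `r i`. -/
def orderOfCoxeterMatrix (r : κ → G) (hr : ∀ i, r i * r i = 1) (hinj : Function.Injective r) :
    CoxeterMatrix κ where
  M := Matrix.of fun i j ↦ orderOf (r i * r j)
  isSymm := by
    ext i j
    simp only [Matrix.transpose_apply, Matrix.of_apply]
    rw [← orderOf_inv, mul_inv_rev, inv_eq_of_mul_eq_one_right (hr i),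
      inv_eq_of_mul_eq_one_right (hr j)]
  diagonal i := by simp [hr i]
  off_diagonal i j hij h := by
    rw [Matrix.of_apply, orderOf_eq_one_iff, mul_eq_one_iff_eq_inv,
      inv_eq_of_mul_eq_one_right (hr j)] at h
    exact hij (hinj h)

theorem isLiftable_orderOfCoxeterMatrix (hr : ∀ i, r i * r i = 1) (hinj : Function.Injective r) :
    (orderOfCoxeterMatrix r hr hinj).IsLiftable r :=
  fun i j ↦ pow_orderOf_eq_one (r i * r j)

end Involutions

section CoxeterLength

variable {κ W : Type*} [Group W] {M : CoxeterMatrix κ} (cs : CoxeterSystem M W)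

open CoxeterSystem (alternatingWord)

theorem exists_eq_mul_wordProd_alternatingWord {w : W} {s : κ} (hs : ¬cs.IsRightDescent w s)
    (t : κ) : ∃ (v : W) (n : ℕ), w = v * cs.wordProd (alternatingWord s t n) ∧
      cs.length w = cs.length v + n ∧ ¬cs.IsRightDescent v s ∧ ¬cs.IsRightDescent v t := by
  induction hl : cs.length w using Nat.strong_induction_on generalizing w s t with
  | _ l ih =>
    subst hl
    by_cases ht : cs.IsRightDescent w t
    · -- Strip `t` from the right of `w` and exchange the roles of `s` and `t`.
      obtain ⟨v, n, hw, hlen, hvt, hvs⟩ :=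
        ih _ ht (cs.isRightDescent_iff_not_isRightDescent_mul.mp ht) s rfl
      refine ⟨v, n + 1, ?_, ?_, hvs, hvt⟩
      · rw [CoxeterSystem.alternatingWord_succ, cs.wordProd_concat, ← mul_assoc, ← hw,
          cs.simple_mul_simple_cancel_right]
      · rw [← cs.isRightDescent_iff.mp ht, hlen, add_assoc]
    · exact ⟨w, 0, by simp [alternatingWord], rfl, hs, ht⟩

theorem lt_of_length_mul_wordProd_alternatingWord {v : W} {s t : κ} {n : ℕ} (hM : M s t ≠ 0)
    (hlen : cs.length (v * cs.wordProd (alternatingWord s t n)) = cs.length v + n)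
    (hs : ¬cs.IsRightDescent (v * cs.wordProd (alternatingWord s t n)) s) : n < M s t := by
  have hword : v * cs.wordProd (alternatingWord s t n) * cs.simple s =
      v * cs.wordProd (alternatingWord t s (n + 1)) := by
    rw [CoxeterSystem.alternatingWord_succ, cs.wordProd_concat, mul_assoc]
  have hlen' := cs.not_isRightDescent_iff.mp hs
  rw [hword, hlen] at hlen'
  have hreduced : cs.IsReduced (alternatingWord t s (n + 1)) := by
    have hle := cs.length_wordProd_le (alternatingWord t s (n + 1))
    have hmul := cs.length_mul_le v (cs.wordProd (alternatingWord t s (n + 1)))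
    rw [CoxeterSystem.length_alternatingWord] at hle
    rw [CoxeterSystem.IsReduced, CoxeterSystem.length_alternatingWord]
    lia
  by_contra! hle
  rw [M.symmetric] at hM hle
  exact cs.not_isReduced_alternatingWord t s hM (Nat.lt_succ_of_le hle) hreduced

end CoxeterLength

section GeometricRepresentation

variable {κ E W : Type*} [AddCommGroup E] [Module ℝ E] {B : LinearMap.BilinForm ℝ E} {α : κ → E}
  {hα : ∀ i, B (α i) (α i) = 1} [Group W] {M : CoxeterMatrix κ} {cs : CoxeterSystem M W}
  {φ : W →* E ≃ₗ[ℝ] E}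

open CoxeterSystem (alternatingWord)
open Polynomial.Chebyshev (U)

theorem map_wordProd_alternatingWord_apply (hφ : ∀ i, φ (cs.simple i) = unitReflection B (hα i))
    {s t : κ} (hst : B (α s) (α t) = B (α t) (α s)) (n : ℕ) :
    φ (cs.wordProd (alternatingWord s t n)) (α s) =
      (U ℝ n).eval (-B (α s) (α t)) • α (if Even n then s else t) +
        (U ℝ (n - 1)).eval (-B (α s) (α t)) • α (if Even n then t else s) := by
  induction n with
  | zero => simp [alternatingWord]
  | succ n ih =>
    rw [CoxeterSystem.alternatingWord_succ', cs.wordProd_cons, map_mul, LinearEquiv.mul_apply, ih,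
      hφ, map_add, map_smul, map_smul, unitReflection_apply_self, unitReflection_apply]
    have hU : (U ℝ (n + 1)).eval (-B (α s) (α t)) =
        -(2 * B (α s) (α t)) * (U ℝ n).eval (-B (α s) (α t)) -
          (U ℝ (n - 1)).eval (-B (α s) (α t)) := by
      simp [Polynomial.Chebyshev.U_add_one]
    push_cast
    rw [add_sub_cancel_right, hU]
    by_cases hn : Even n
    · simp only [hn, Nat.even_add_one, if_true, if_false, not_true_eq_false, ← hst]
      module
    · simp only [hn, Nat.even_add_one, if_true, if_false, not_false_eq_true]
      module

theorem map_mul_wordProd_alternatingWord_apply_mem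
    (hφ : ∀ i, φ (cs.simple i) = unitReflection B (hα i))
    {s t : κ} (hst : B (α s) (α t) = B (α t) (α s)) {n : ℕ}
    (hU : ∀ m : ℤ, -1 ≤ m → m ≤ n → 0 ≤ (U ℝ m).eval (-B (α s) (α t)))
    {C : PointedCone ℝ E} {v : W} (hs : φ v (α s) ∈ C) (ht : φ v (α t) ∈ C) :
    φ (v * cs.wordProd (alternatingWord s t n)) (α s) ∈ C := by
  rw [map_mul, LinearEquiv.mul_apply, map_wordProd_alternatingWord_apply hφ hst, map_add, map_smul,
    map_smul]
  refine add_mem (PointedCone.smul_mem C (hU n (by lia) le_rfl) ?_)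
    (PointedCone.smul_mem C (hU (n - 1) (by lia) (by lia)) ?_) <;>
  split_ifs <;> assumption

theorem map_apply_mem_hull_of_not_isRightDescent
    (hφ : ∀ i, φ (cs.simple i) = unitReflection B (hα i))
    (hsymm : ∀ i j, B (α i) (α j) = B (α j) (α i))
    (hM : ∀ i j, i ≠ j → B (α i) (α j) ≤ -1 ∨
      ∃ k : ℕ, 2 ≤ k ∧ M i j ≠ 0 ∧ M i j ≤ k ∧ B (α i) (α j) = -Real.cos (Real.pi / k))
    {w : W} {s : κ} (hs : ¬cs.IsRightDescent w s) :
    φ w (α s) ∈ PointedCone.hull ℝ (Set.range α) := by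
  induction hl : cs.length w using Nat.strong_induction_on generalizing w s with
  | _ l ih =>
    subst hl
    obtain rfl | hw := eq_or_ne w 1
    · simpa using Submodule.subset_span (Set.mem_range_self s)
    obtain ⟨t, ht⟩ := cs.exists_rightDescent_of_ne_one hw
    obtain ⟨v, n, hvw, hlen, hvs, hvt⟩ := exists_eq_mul_wordProd_alternatingWord cs hs t
    have hst : s ≠ t := fun h ↦ hs (h ▸ ht)
    have hn : n ≠ 0 := by
      rintro rfl
      exact hvt (by simpa [hvw, alternatingWord] using ht)
    have hU : ∀ m : ℤ, -1 ≤ m → m ≤ n → 0 ≤ (U ℝ m).eval (-B (α s) (α t)) := by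
      intro m hm hmn
      obtain hle | ⟨k, hk, hM0, hMk, hcos⟩ := hM s t hst
      · exact chebyshevU_eval_nonneg_of_one_le (by linarith) hm
      · have hnM : n < M s t :=
          lt_of_length_mul_wordProd_alternatingWord cs hM0 (hvw ▸ hlen) (hvw ▸ hs)
        rw [hcos, neg_neg]
        exact chebyshevU_eval_cos_pi_div_nonneg hk hm (by lia)
    rw [hvw]
    exact map_mul_wordProd_alternatingWord_apply_mem hφ (hsymm s t) hU
      (ih _ (by lia) hvs rfl) (ih _ (by lia) hvt rfl)

theorem map_apply_mem_hull_or_neg_mem_hull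
    (hφ : ∀ i, φ (cs.simple i) = unitReflection B (hα i))
    (hsymm : ∀ i j, B (α i) (α j) = B (α j) (α i))
    (hM : ∀ i j, i ≠ j → B (α i) (α j) ≤ -1 ∨
      ∃ k : ℕ, 2 ≤ k ∧ M i j ≠ 0 ∧ M i j ≤ k ∧ B (α i) (α j) = -Real.cos (Real.pi / k))
    (w : W) (s : κ) :
    φ w (α s) ∈ PointedCone.hull ℝ (Set.range α) ∨
      -φ w (α s) ∈ PointedCone.hull ℝ (Set.range α) := by
  by_cases hs : cs.IsRightDescent w s
  · right
    have hmem := map_apply_mem_hull_of_not_isRightDescent hφ hsymm hM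
      (cs.isRightDescent_iff_not_isRightDescent_mul.mp hs)
    rwa [map_mul, LinearEquiv.mul_apply, hφ, unitReflection_apply_self, map_neg] at hmem
  · exact .inl (map_apply_mem_hull_of_not_isRightDescent hφ hsymm hM hs)

end GeometricRepresentation

section ReflectionGroup

variable {κ E : Type*} [AddCommGroup E] [Module ℝ E] {B : LinearMap.BilinForm ℝ E} {α : κ → E}

theorem apply_mem_hull_or_neg_mem_hull_of_mem_closure (hlin : LinearIndependent ℝ α)
    (hα : ∀ i, B (α i) (α i) = 1) (hsymm : ∀ i j, B (α i) (α j) = B (α j) (α i))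
    (hoff : ∀ i j, i ≠ j → B (α i) (α j) ≤ -1 ∨
      ∃ k : ℕ, 2 ≤ k ∧ B (α i) (α j) = -Real.cos (Real.pi / k))
    {g : E ≃ₗ[ℝ] E}
    (hg : g ∈ Subgroup.closure (Set.range fun i ↦ unitReflection B (hα i))) (i : κ) :
    g (α i) ∈ PointedCone.hull ℝ (Set.range α) ∨
      -g (α i) ∈ PointedCone.hull ℝ (Set.range α) := by
  set r : κ → E ≃ₗ[ℝ] E := fun i ↦ unitReflection B (hα i)
  have hsq : ∀ i, r i * r i = 1 := fun i ↦ unitReflection_mul_self (hα i)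
  have hinj : Function.Injective r := unitReflection_injective hlin hα
  let cs := (orderOfCoxeterMatrix r hsq hinj).toCoxeterSystem
  let φ := cs.lift ⟨r, isLiftable_orderOfCoxeterMatrix hsq hinj⟩
  have hφ : ∀ i, φ (cs.simple i) = unitReflection B (hα i) := fun i ↦ cs.lift_apply_simple _ i
  obtain ⟨w, rfl⟩ : g ∈ φ.range := by
    refine (Subgroup.closure_le _).mpr ?_ hg
    rintro _ ⟨j, rfl⟩
    exact ⟨cs.simple j, hφ j⟩
  refine map_apply_mem_hull_or_neg_mem_hull hφ hsymm (fun i j hij ↦ ?_) w i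
  refine (hoff i j hij).imp_right fun ⟨k, hk, hcos⟩ ↦ ?_
  have hpow : (r i * r j) ^ k = 1 :=
    unitReflection_mul_pow_eq_one (hα i) (hα j) (hsymm i j) hk hcos
  exact ⟨k, hk, (orderOf_pos_iff.mpr (isOfFinOrder_iff_pow_eq_one.mpr ⟨k, by lia, hpow⟩)).ne',
    orderOf_le_of_pow_eq_one (by lia) hpow, hcos⟩

theorem repr_nonneg_of_mem_hull (b : Module.Basis κ ℝ E) {x : E}
    (hx : x ∈ PointedCone.hull ℝ (Set.range b)) : 0 ≤ b.repr x := by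
  induction hx using Submodule.span_induction with
  | mem x hx =>
    obtain ⟨i, rfl⟩ := hx
    simp [Finsupp.single_nonneg]
  | zero => simp
  | add x y _ _ hx hy => simpa using add_nonneg hx hy
  | smul c x _ hx =>
    have hsmul : 0 ≤ (c : ℝ) • b.repr x := smul_nonneg c.2 hx
    rwa [← map_smul] at hsmul

end ReflectionGroup

section AccumulationPoints

theorem accPt_diff_singleton {X : Type*} [TopologicalSpace X] [T1Space X] {x : X} {S : Set X}
    (hx : AccPt x (𝓟 S)) (a : X) : AccPt x (𝓟 (S \ {a})) := by
  rw [accPt_iff_frequently] at hx ⊢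
  obtain rfl | hxa := eq_or_ne x a
  · exact hx.mono fun y ⟨hyx, hy⟩ ↦ ⟨hyx, hy, hyx⟩
  · have hne : ∀ᶠ y in 𝓝 x, y ≠ a := isOpen_ne.mem_nhds hxa
    exact (hx.and_eventually hne).mono fun y ⟨⟨hyx, hy⟩, hya⟩ ↦ ⟨hyx, hy, hya⟩

theorem accPt_apply_of_injOn {X Y : Type*} [TopologicalSpace X] [TopologicalSpace Y] {f : X → Y}
    {x : X} {S : Set X} {T : Set Y} (hx : AccPt x (𝓟 S)) (hf : ContinuousAt f x)
    (hinj : Set.InjOn f (insert x S)) (hST : Set.MapsTo f S T) : AccPt (f x) (𝓟 T) := by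
  rw [accPt_iff_frequently] at hx ⊢
  exact hf.tendsto.frequently <| hx.mono fun y ⟨hyx, hy⟩ ↦
    ⟨fun h ↦ hyx (hinj (.inr hy) (.inl rfl) h), hST hy⟩

end AccumulationPoints

section Roots

variable {B : LinearMap.BilinForm ℝ V} {Δ : Module.Basis ι ℝ V}

omit [Fintype ι]

theorem simpleReflections_eq_range (hdiag : ∀ i, B (Δ i) (Δ i) = 1) :
    simpleReflections B Δ = Set.range fun i ↦ unitReflection B (hdiag i) := by
  ext e
  simp only [simpleReflections, Set.mem_ofPred_eq, Set.mem_range, LinearEquiv.ext_iff,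
    unitReflection_apply, hdiag, div_one, eq_comm]

theorem unitReflection_mem_cox (hdiag : ∀ i, B (Δ i) (Δ i) = 1) (i : ι) :
    unitReflection B (hdiag i) ∈ cox B Δ := by
  rw [cox, simpleReflections_eq_range hdiag]
  exact Subgroup.subset_closure (Set.mem_range_self i)

theorem basis_mem_Phi (i : ι) : Δ i ∈ Phi B Δ :=
  ⟨1, one_mem _, i, rfl⟩

theorem apply_mem_Phi {w : V ≃ₗ[ℝ] V} (hw : w ∈ cox B Δ) {ρ : V} (hρ : ρ ∈ Phi B Δ) :
    w ρ ∈ Phi B Δ := by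
  obtain ⟨u, hu, i, rfl⟩ := hρ
  exact ⟨w * u, mul_mem hw hu, i, rfl⟩

theorem neg_mem_Phi (hdiag : ∀ i, B (Δ i) (Δ i) = 1) {ρ : V} (hρ : ρ ∈ Phi B Δ) :
    -ρ ∈ Phi B Δ := by
  obtain ⟨w, hw, i, rfl⟩ := hρ
  rw [← map_neg, ← unitReflection_apply_self (hdiag i)]
  exact apply_mem_Phi hw (apply_mem_Phi (unitReflection_mem_cox hdiag i) (basis_mem_Phi i))

theorem ne_zero_of_mem_Phi {ρ : V} (hρ : ρ ∈ Phi B Δ) : ρ ≠ 0 := by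
  obtain ⟨w, -, i, rfl⟩ := hρ
  exact w.map_ne_zero_iff.mpr (Δ.ne_zero i)

/-- The positivity theorem `Φ = Φ⁺ ∪ -Φ⁺` of root systems, as a property of `B` and `Δ`. -/
def SignCoherent (B : LinearMap.BilinForm ℝ V) (Δ : Module.Basis ι ℝ V) : Prop :=
  ∀ ρ ∈ Phi B Δ, 0 ≤ Δ.repr ρ ∨ 0 ≤ Δ.repr (-ρ)

theorem signCoherent_of_le_neg_one_or_eq_neg_cos (hsymm : ∀ i j, B (Δ i) (Δ j) = B (Δ j) (Δ i))
    (hdiag : ∀ i, B (Δ i) (Δ i) = 1)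
    (hoff : ∀ i j, i ≠ j → B (Δ i) (Δ j) ≤ -1 ∨
      ∃ k : ℕ, 2 ≤ k ∧ B (Δ i) (Δ j) = -Real.cos (Real.pi / k)) :
    SignCoherent B Δ := by
  rintro _ ⟨w, hw, i, rfl⟩
  rw [cox, simpleReflections_eq_range hdiag] at hw
  have hhull :=
    apply_mem_hull_or_neg_mem_hull_of_mem_closure Δ.linearIndependent hdiag hsymm hoff hw i
  exact hhull.imp (repr_nonneg_of_mem_hull Δ) (repr_nonneg_of_mem_hull Δ)

end Roots

section Normalization

variable {Δ : Module.Basis ι ℝ V}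

theorem l1_smul (c : ℝ) (v : V) : l1 Δ (c • v) = c * l1 Δ v := by
  simp [l1, Finset.mul_sum]

theorem l1_neg (v : V) : l1 Δ (-v) = -l1 Δ v := by
  simp [l1]

theorem l1_basis (i : ι) : l1 Δ (Δ i) = 1 := by
  classical simp [l1, Finsupp.single_apply]

theorem l1_pos {v : V} (hv : 0 ≤ Δ.repr v) (hv0 : v ≠ 0) : 0 < l1 Δ v := by
  obtain ⟨i, hi⟩ := Finsupp.ne_iff.mp (Δ.repr.map_ne_zero_iff.mpr hv0)
  exact Finset.sum_pos' (fun j _ ↦ hv j) ⟨i, Finset.mem_univ i, (hv i).lt_of_ne' hi⟩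

theorem nrm_smul {c : ℝ} (hc : c ≠ 0) (v : V) : nrm Δ (c • v) = nrm Δ v := by
  rw [nrm, nrm, l1_smul, smul_smul, mul_inv_rev, inv_mul_cancel_right₀ hc]

theorem nrm_neg (v : V) : nrm Δ (-v) = nrm Δ v := by
  rw [← neg_one_smul ℝ v, nrm_smul (by norm_num)]

theorem l1_nrm {v : V} (hv : l1 Δ v ≠ 0) : l1 Δ (nrm Δ v) = 1 := by
  rw [nrm, l1_smul, inv_mul_cancel₀ hv]

theorem nrm_eq_self {v : V} (hv : l1 Δ v = 1) : nrm Δ v = v := by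
  rw [nrm, hv, inv_one, one_smul]

theorem nrm_apply_nrm (w : V ≃ₗ[ℝ] V) {v : V} (hv : l1 Δ v ≠ 0) :
    nrm Δ (w (nrm Δ v)) = nrm Δ (w v) :=
  (congrArg (nrm Δ) (map_smul w _ v)).trans (nrm_smul (inv_ne_zero hv) _)

theorem l1_apply_nrm (w : V ≃ₗ[ℝ] V) (v : V) :
    l1 Δ (w (nrm Δ v)) = (l1 Δ v)⁻¹ * l1 Δ (w v) := by
  rw [nrm, map_smul, l1_smul]

theorem injOn_nrm_apply (w : V ≃ₗ[ℝ] V) :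
    Set.InjOn (fun x ↦ nrm Δ (w x)) {x | l1 Δ x = 1 ∧ l1 Δ (w x) ≠ 0} := by
  have hleft : ∀ x, l1 Δ x = 1 → l1 Δ (w x) ≠ 0 → nrm Δ (w⁻¹ (nrm Δ (w x))) = x := by
    intro x hx hwx
    rw [nrm_apply_nrm _ hwx]
    exact (congrArg (nrm Δ) (w.symm_apply_apply x)).trans (nrm_eq_self hx)
  rintro x ⟨hx, hwx⟩ y ⟨hy, hwy⟩ hxy
  rw [← hleft x hx hwx, ← hleft y hy hwy]
  exact congrArg (fun z ↦ nrm Δ (w⁻¹ z)) hxy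

/-- The normalized action `x ↦ w · x` of `w` is defined on `S` and maps `S` into itself. -/
def NormalizedMapsTo (Δ : Module.Basis ι ℝ V) (w : V ≃ₗ[ℝ] V) (S : Set V) : Prop :=
  ∀ x ∈ S, l1 Δ (w x) ≠ 0 ∧ nrm Δ (w x) ∈ S

namespace NormalizedMapsTo

variable {S T : Set V} {w u : V ≃ₗ[ℝ] V}

theorem one (hS : ∀ x ∈ S, l1 Δ x = 1) : NormalizedMapsTo Δ 1 S := fun x hx ↦ by
  rw [LinearEquiv.coe_one, id_eq, nrm_eq_self (hS x hx), hS x hx]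
  exact ⟨one_ne_zero, hx⟩

theorem mul (hw : NormalizedMapsTo Δ w S) (hu : NormalizedMapsTo Δ u S) :
    NormalizedMapsTo Δ (w * u) S := fun x hx ↦ by
  obtain ⟨hux, huxS⟩ := hu x hx
  obtain ⟨hwux, hwuxS⟩ := hw _ huxS
  rw [l1_apply_nrm] at hwux
  rw [nrm_apply_nrm w hux] at hwuxS
  exact ⟨right_ne_zero_of_mul hwux, hwuxS⟩

theorem union (hS : NormalizedMapsTo Δ w S) (hT : NormalizedMapsTo Δ w T) :
    NormalizedMapsTo Δ w (S ∪ T) := fun x hx ↦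
  hx.elim (fun hx ↦ (hS x hx).imp_right .inl) fun hx ↦ (hT x hx).imp_right .inr

end NormalizedMapsTo

end Normalization

section NormalizedRoots

variable {B : LinearMap.BilinForm ℝ V} {Δ : Module.Basis ι ℝ V}

theorem l1_ne_zero_of_mem_Phi (hsign : SignCoherent B Δ) {ρ : V} (hρ : ρ ∈ Phi B Δ) :
    l1 Δ ρ ≠ 0 := by
  have hρ0 := ne_zero_of_mem_Phi hρ
  obtain hpos | hneg := hsign ρ hρ
  · exact (l1_pos hpos hρ0).ne'
  · simpa [l1_neg] using (l1_pos hneg (neg_ne_zero.mpr hρ0)).ne'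

theorem nPhi_eq_image_Phi (hdiag : ∀ i, B (Δ i) (Δ i) = 1) (hsign : SignCoherent B Δ) :
    nPhi B Δ = nrm Δ '' Phi B Δ := by
  refine (Set.image_mono fun ρ hρ ↦ hρ.1).antisymm ?_
  rintro _ ⟨ρ, hρ, rfl⟩
  obtain hpos | hneg := hsign ρ hρ
  · exact ⟨ρ, ⟨hρ, hpos⟩, rfl⟩
  · exact ⟨-ρ, ⟨neg_mem_Phi hdiag hρ, hneg⟩, nrm_neg ρ⟩

theorem normalizedMapsTo_nPhi (hdiag : ∀ i, B (Δ i) (Δ i) = 1) (hsign : SignCoherent B Δ)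
    {w : V ≃ₗ[ℝ] V} (hw : w ∈ cox B Δ) : NormalizedMapsTo Δ w (nPhi B Δ) := by
  rw [nPhi_eq_image_Phi hdiag hsign]
  rintro _ ⟨ρ, hρ, rfl⟩
  have hρ1 := l1_ne_zero_of_mem_Phi hsign hρ
  have hwρ := apply_mem_Phi hw hρ
  rw [l1_apply_nrm, nrm_apply_nrm w hρ1]
  exact ⟨mul_ne_zero (inv_ne_zero hρ1) (l1_ne_zero_of_mem_Phi hsign hwρ), w ρ, hwρ, rfl⟩

theorem l1_eq_one_of_mem_nPhi {x : V} (hx : x ∈ nPhi B Δ) : l1 Δ x = 1 := by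
  obtain ⟨ρ, ⟨hρ, hpos⟩, rfl⟩ := hx
  exact l1_nrm (l1_pos hpos (ne_zero_of_mem_Phi hρ)).ne'

theorem repr_unitReflection_apply_nonneg (hdiag : ∀ i, B (Δ i) (Δ i) = 1)
    (hsign : SignCoherent B Δ) (i : ι) {x : V} (hx : x ∈ nPhi B Δ \ {Δ i}) :
    0 ≤ Δ.repr (unitReflection B (hdiag i) x) := by
  obtain ⟨⟨ρ, ⟨hρ, hpos⟩, rfl⟩, hne⟩ := hx
  have hl1 := l1_pos hpos (ne_zero_of_mem_Phi hρ)
  rw [nrm, map_smul, map_smul]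
  refine smul_nonneg (inv_nonneg.mpr hl1.le) ?_
  refine (hsign _ (apply_mem_Phi (unitReflection_mem_cox hdiag i) hρ)).resolve_right fun hneg ↦ ?_
  have hcoord : ∀ j ≠ i, Δ.repr ρ j = 0 := by
    intro j hj
    have hle : Δ.repr ρ j ≤ 0 := by
      simpa [unitReflection_apply, Finsupp.single_apply, hj.symm] using hneg j
    exact hle.antisymm (hpos j)
  have hρi : ρ = Δ.repr ρ i • Δ i := by
    conv_lhs => rw [← Δ.sum_repr ρ]
    exact Finset.sum_eq_single i (fun j _ hj ↦ by rw [hcoord j hj, zero_smul]) (by simp)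
  have hρi0 : Δ.repr ρ i ≠ 0 := fun h0 ↦ ne_zero_of_mem_Phi hρ (by rw [hρi, h0, zero_smul])
  exact hne (by rw [hρi, nrm_smul hρi0, nrm_eq_self (l1_basis i), Set.mem_singleton_iff])

end NormalizedRoots

section LimitRoots

variable {B : LinearMap.BilinForm ℝ V} {Δ : Module.Basis ι ℝ V}

theorem continuous_l1 (Δ : Module.Basis ι ℝ V) : Continuous (l1 Δ) := by
  have := Module.Basis.finiteDimensional_of_finite Δ
  exact continuous_finsetSum _ fun i _ ↦ (Δ.coord i).continuous_of_finiteDimensional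

theorem continuousAt_nrm_apply (w : V ≃ₗ[ℝ] V) {x : V} (hx : l1 Δ (w x) ≠ 0) :
    ContinuousAt (fun y ↦ nrm Δ (w y)) x := by
  have := Module.Basis.finiteDimensional_of_finite Δ
  have hw : Continuous w := LinearMap.continuous_of_finiteDimensional w.toLinearMap
  exact (((continuous_l1 Δ).comp hw).continuousAt.inv₀ hx).smul hw.continuousAt

omit [Fintype ι] in
theorem isClosed_setOf_repr_nonneg [Finite ι] (Δ : Module.Basis ι ℝ V) :
    IsClosed {v | 0 ≤ Δ.repr v} := by
  have := Module.Basis.finiteDimensional_of_finite Δ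
  simp only [Finsupp.le_def, Set.ofPred_forall]
  exact isClosed_iInter fun i ↦
    isClosed_le continuous_const (Δ.coord i).continuous_of_finiteDimensional

theorem nPhi_union_Eset : nPhi B Δ ∪ Eset B Δ = closure (nPhi B Δ) :=
  (closure_eq_self_union_derivedSet (nPhi B Δ)).symm

theorem l1_eq_one_of_mem_Eset {x : V} (hx : x ∈ Eset B Δ) : l1 Δ x = 1 :=
  closure_minimal (fun _ ↦ l1_eq_one_of_mem_nPhi) (isClosed_eq (continuous_l1 Δ) continuous_const)
    (derivedSet_subset_closure _ hx)

theorem l1_unitReflection_apply_pos_of_mem_Eset (hdiag : ∀ i, B (Δ i) (Δ i) = 1)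
    (hsign : SignCoherent B Δ) (i : ι) {x : V} (hx : x ∈ Eset B Δ) :
    0 < l1 Δ (unitReflection B (hdiag i) x) := by
  have := Module.Basis.finiteDimensional_of_finite Δ
  have hx0 : x ≠ 0 := by
    rintro rfl
    simpa [l1] using l1_eq_one_of_mem_Eset hx
  have hcont : Continuous (unitReflection B (hdiag i)) :=
    LinearMap.continuous_of_finiteDimensional (unitReflection B (hdiag i)).toLinearMap
  have hclosed := (isClosed_setOf_repr_nonneg Δ).preimage hcont
  refine l1_pos (closure_minimal ?_ hclosed (derivedSet_subset_closure _
    (accPt_diff_singleton hx (Δ i)))) ((LinearEquiv.map_ne_zero_iff _).mpr hx0)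
  exact fun y hy ↦ repr_unitReflection_apply_nonneg hdiag hsign i hy

theorem normalizedMapsTo_Eset_unitReflection (hdiag : ∀ i, B (Δ i) (Δ i) = 1)
    (hsign : SignCoherent B Δ) (i : ι) :
    NormalizedMapsTo Δ (unitReflection B (hdiag i)) (Eset B Δ) := by
  intro x hx
  have hl1 := (l1_unitReflection_apply_pos_of_mem_Eset hdiag hsign i hx).ne'
  have hmaps := normalizedMapsTo_nPhi hdiag hsign (unitReflection_mem_cox hdiag i)
  have hsubset : insert x (nPhi B Δ) ⊆
      {y | l1 Δ y = 1 ∧ l1 Δ (unitReflection B (hdiag i) y) ≠ 0} :=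
    Set.insert_subset ⟨l1_eq_one_of_mem_Eset hx, hl1⟩ fun y hy ↦
      ⟨l1_eq_one_of_mem_nPhi hy, (hmaps y hy).1⟩
  have hacc : AccPt (nrm Δ (unitReflection B (hdiag i) x)) (𝓟 (nPhi B Δ)) :=
    accPt_apply_of_injOn (f := fun y ↦ nrm Δ (unitReflection B (hdiag i) y)) hx
      (continuousAt_nrm_apply _ hl1) ((injOn_nrm_apply _).mono hsubset) fun y hy ↦ (hmaps y hy).2
  exact ⟨hl1, hacc⟩

theorem normalizedMapsTo_Eset (hdiag : ∀ i, B (Δ i) (Δ i) = 1) (hsign : SignCoherent B Δ)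
    {w : V ≃ₗ[ℝ] V} (hw : w ∈ cox B Δ) : NormalizedMapsTo Δ w (Eset B Δ) := by
  rw [cox, simpleReflections_eq_range hdiag] at hw
  have hrefl := normalizedMapsTo_Eset_unitReflection hdiag hsign
  induction hw using Subgroup.closure_induction'' with
  | one => exact .one fun x ↦ l1_eq_one_of_mem_Eset
  | mem _ hw =>
    obtain ⟨i, rfl⟩ := hw
    exact hrefl i
  | inv_mem _ hw =>
    obtain ⟨i, rfl⟩ := hw
    rw [inv_eq_of_mul_eq_one_right (unitReflection_mul_self (hdiag i))]
    exact hrefl i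
  | mul _ _ _ _ hw hu => exact hw.mul hu

end LimitRoots

/-- The normalized action of `W` on `Φ̂ ∪ E(Φ)`:
(i) for `w ∈ W` and `x ∈ Φ̂ ∪ E(Φ)`, `|w(x)|₁ ≠ 0`, so `w·x = (w(x))^` is defined;
(ii) `Φ̂` and `E(Φ)` are stable under this action, and `Φ̂ = W · Δ`;
(iii) consequently `Φ̂ ∪ E(Φ)`, which is the topological closure of `Φ̂`, is stable. -/
theorem statement9 (B : LinearMap.BilinForm ℝ V) (Δ : Module.Basis ι ℝ V)
    (hsymm : ∀ u v : V, B u v = B v u)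
    (hdiag : ∀ i : ι, B (Δ i) (Δ i) = 1)
    (hoff : ∀ i j : ι, i ≠ j → B (Δ i) (Δ j) ≤ -1 ∨
      ∃ k : ℕ, 2 ≤ k ∧ B (Δ i) (Δ j) = -Real.cos (Real.pi / (k : ℝ))) :
    (∀ w ∈ cox B Δ, ∀ x ∈ nPhi B Δ ∪ Eset B Δ, l1 Δ (w x) ≠ 0) ∧
    (∀ w ∈ cox B Δ, ∀ x ∈ nPhi B Δ, nrm Δ (w x) ∈ nPhi B Δ) ∧
    (∀ w ∈ cox B Δ, ∀ x ∈ Eset B Δ, nrm Δ (w x) ∈ Eset B Δ) ∧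
    (nPhi B Δ = { y : V | ∃ w ∈ cox B Δ, ∃ i : ι, y = nrm Δ (w (Δ i)) }) ∧
    (nPhi B Δ ∪ Eset B Δ = closure (nPhi B Δ)) ∧
    (∀ w ∈ cox B Δ, ∀ x ∈ nPhi B Δ ∪ Eset B Δ, nrm Δ (w x) ∈ nPhi B Δ ∪ Eset B Δ) := by
  have hsign : SignCoherent B Δ :=
    signCoherent_of_le_neg_one_or_eq_neg_cos (fun i j ↦ hsymm (Δ i) (Δ j)) hdiag hoff
  have hnPhi : ∀ w ∈ cox B Δ, NormalizedMapsTo Δ w (nPhi B Δ) := fun w hw ↦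
    normalizedMapsTo_nPhi hdiag hsign hw
  have hEset : ∀ w ∈ cox B Δ, NormalizedMapsTo Δ w (Eset B Δ) := fun w hw ↦
    normalizedMapsTo_Eset hdiag hsign hw
  have hunion : ∀ w ∈ cox B Δ, NormalizedMapsTo Δ w (nPhi B Δ ∪ Eset B Δ) := fun w hw ↦
    (hnPhi w hw).union (hEset w hw)
  refine ⟨fun w hw x hx ↦ (hunion w hw x hx).1, fun w hw x hx ↦ (hnPhi w hw x hx).2,
    fun w hw x hx ↦ (hEset w hw x hx).2, ?_, nPhi_union_Eset,
    fun w hw x hx ↦ (hunion w hw x hx).2⟩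
  rw [nPhi_eq_image_Phi hdiag hsign]
  ext y
  simp [Phi, eq_comm]
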